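/- arXiv:2408.08218 — 3 statements merged into one kernel-verified Lean document; each statement's English description precedes it below -/
import Mathlib

section
/- Let m be a positive integer. If m is odd, then the maximum element of F_m equals (2/3)(2^m+1) - 1, and if m is even, then the maximum element of F_m equals (2/3)(2^m-1). -/
open Polynomial

/-- `fibSet m` is the set of fibbinary integers below `2^m`: integers in `{0,…,2^m-1}`
whose binary representation has no two consecutive ones. -/
noncomputable def fibSet (m : ℕ) : Finset ℕ :=
  @Finset.filter _ (fun i => ∀ j : ℕ, ¬(i.testBit j ∧ i.testBit (j + 1)))
    (Classical.decPred _) (Finset.range (2 ^ m))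

/-!
In a fibbinary integer `i` no two ones are adjacent, so `i` and `i / 2` have no binary digit one in
common and are added without carries. Hence `i + i / 2` still has at most `m` digits when
`i < 2 ^ m`, which says exactly that `i ≤ 2 ^ (m + 1) / 3`. This bound is itself fibbinary: after
deleting lower digits, two consecutive ones in `2 ^ n / 3` would give `2 ^ k / 3` congruent to `3`
modulo `4`, while the residue of `2 ^ k` modulo `12` is never `9`, `10` or `11`.
-/

/-- Fibbinary integers: no two consecutive binary digits are both one. This is the condition that
`fibSet m` imposes besides the bound `2 ^ m`. -/
def IsFibbinary (i : ℕ) : Prop :=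
  ∀ j : ℕ, ¬(i.testBit j ∧ i.testBit (j + 1))

theorem mem_fibSet {m i : ℕ} : i ∈ fibSet m ↔ i < 2 ^ m ∧ IsFibbinary i := by
  simp only [fibSet, IsFibbinary, Finset.mem_filter, Finset.mem_range]

theorem add_lt_two_pow_of_and_eq_zero {m x y : ℕ} (hx : x < 2 ^ m) (hy : y < 2 ^ m)
    (h : x &&& y = 0) : x + y < 2 ^ m := by
  have disjoint : BitVec.ofNatLT x hx &&& BitVec.ofNatLT y hy = 0#m :=
    BitVec.eq_of_toNat_eq (by simpa only [BitVec.toNat_and, BitVec.toNat_ofNatLT,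
      BitVec.toNat_zero] using h)
  have no_overflow := BitVec.toNat_add_of_and_eq_zero disjoint
  rw [BitVec.toNat_ofNatLT, BitVec.toNat_ofNatLT] at no_overflow
  exact no_overflow ▸ BitVec.isLt _

theorem IsFibbinary.and_div_two_eq_zero {i : ℕ} (hi : IsFibbinary i) : i &&& i / 2 = 0 :=
  Nat.eq_of_testBit_eq fun j => by
    simpa only [Nat.testBit_and, Nat.testBit_div_two, Nat.zero_testBit, Bool.and_eq_false_iff,
      not_and_or, Bool.not_eq_true] using hi j

theorem IsFibbinary.add_div_two_lt_two_pow {m i : ℕ} (hi : IsFibbinary i) (him : i < 2 ^ m) :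
    i + i / 2 < 2 ^ m :=
  add_lt_two_pow_of_and_eq_zero him ((Nat.div_le_self i 2).trans_lt him) hi.and_div_two_eq_zero

theorem IsFibbinary.le_two_pow_succ_div_three {m i : ℕ} (hi : IsFibbinary i) (him : i < 2 ^ m) :
    i ≤ 2 ^ (m + 1) / 3 := by
  have := hi.add_div_two_lt_two_pow him
  omega

theorem two_pow_mod_three (n : ℕ) : 2 ^ n % 3 = if Even n then 1 else 2 := by
  induction n with
  | zero => decide
  | succ n ih =>
    rw [pow_succ, Nat.mul_mod, ih]
    by_cases h : Even n <;> simp [Nat.even_add_one, h]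

theorem two_pow_mod_twelve (n : ℕ) :
    2 ^ n % 12 = 1 ∨ 2 ^ n % 12 = 2 ∨ 2 ^ n % 12 = 4 ∨ 2 ^ n % 12 = 8 := by
  induction n with
  | zero => decide
  | succ n ih => omega

theorem isFibbinary_two_pow_div_three (n : ℕ) : IsFibbinary (2 ^ n / 3) := by
  rintro j ⟨bit, next_bit⟩
  rw [Nat.testBit_eq_decide_div_mod_eq, decide_eq_true_iff, Nat.div_right_comm] at bit next_bit
  rw [pow_succ, ← Nat.div_div_eq_div_mul] at next_bit
  have mod_twelve : 9 ≤ 2 ^ n / 2 ^ j % 12 := by omega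
  rcases le_or_gt j n with hjn | hnj
  · rw [Nat.pow_div hjn two_pos] at mod_twelve
    have := two_pow_mod_twelve (n - j)
    omega
  · rw [Nat.div_eq_of_lt (Nat.pow_lt_pow_right one_lt_two hnj)] at mod_twelve
    omega

theorem max_fibSet_eq_two_pow_succ_div_three (m : ℕ) :
    (fibSet m).max = (2 ^ (m + 1) / 3 : ℕ) := by
  apply le_antisymm
  · refine Finset.max_le fun i hi => WithBot.coe_le_coe.mpr ?_
    obtain ⟨him, hfib⟩ := mem_fibSet.mp hi
    exact hfib.le_two_pow_succ_div_three him
  · have lt_two_pow : 2 ^ (m + 1) / 3 < 2 ^ m := by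
      have := Nat.two_pow_pos m
      omega
    exact Finset.le_max (mem_fibSet.mpr ⟨lt_two_pow, isFibbinary_two_pow_div_three (m + 1)⟩)

theorem max_fibSet (m : ℕ) (hm : 0 < m) :
    (Odd m → (fibSet m).max = ((2 * (2 ^ m + 1)) / 3 - 1 : ℕ)) ∧
    (Even m → (fibSet m).max = ((2 * (2 ^ m - 1)) / 3 : ℕ)) := by
  have mod_three := two_pow_mod_three m
  have pos := Nat.two_pow_pos m
  rw [max_fibSet_eq_two_pow_succ_div_three]
  refine ⟨fun hodd => congrArg Nat.cast ?_, fun heven => congrArg Nat.cast ?_⟩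
  · rw [if_neg (Nat.not_even_iff_odd.mpr hodd)] at mod_three
    omega
  · rw [if_pos heven] at mod_three
    omega
end

section
/- Let m be a positive integer with m ≥ 2. If m is odd, then the maximum element of F^cyc_m equals (2/3)(2^m+1) - 2, and if m is even, then the maximum element of F^cyc_m equals (2/3)(2^m-1). -/
open Polynomial

/-- `fibCycSet m` is the set of integers in `{1,…,2^m-2}` whose `m`-bit binary
representation has no two cyclically consecutive ones. -/
def fibCycSet (m : ℕ) : Finset ℕ :=
  (Finset.Icc 1 (2 ^ m - 2)).filter
    (fun i => ∀ j < m, ¬(i.testBit j ∧ i.testBit ((j + 1) % m)))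

/-!
If `n` has no two adjacent ones, then `n` and `2 * n` have no common one, so their sum `3 * n` is
their bitwise disjunction and has at most one digit more than `n`. Hence `3 * n < 2 ^ (m + 1)` for
every `n < 2 ^ m` without adjacent ones, which settles even `m`, as `1010…10` attains the bound.
For odd `m`, cyclicity forces the lowest or the highest of the `m` digits to vanish: in the first
case apply the bound to `n / 2 < 2 ^ (m - 1)`, in the second to `n < 2 ^ (m - 1)`; the maximum is
`1010…100`.
-/

theorem or_add_and (x y : ℕ) : (x ||| y) + (x &&& y) = x + y := by
  induction x using Nat.div2Induction generalizing y with
  | ind x ih =>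
    rcases x.eq_zero_or_pos with rfl | hx
    · simp
    have hhalf : (x ||| y) / 2 + (x &&& y) / 2 = x / 2 + y / 2 := by
      rw [Nat.or_div_two, Nat.and_div_two, ih hx]
    have hor : (x ||| y) % 2 = 1 ↔ x % 2 = 1 ∨ y % 2 = 1 := Nat.or_mod_two_eq_one
    have hand : (x &&& y) % 2 = 1 ↔ x % 2 = 1 ∧ y % 2 = 1 := Nat.and_mod_two_eq_one
    omega

theorem testBit_sum_two_pow (s : Finset ℕ) (j : ℕ) : (∑ i ∈ s, 2 ^ i).testBit j ↔ j ∈ s := by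
  rw [← Nat.mem_bitIndices, ← List.mem_toFinset, Finset.toFinset_bitIndices_sum_two_pow]

theorem mem_fibSet_s1 {m n : ℕ} :
    n ∈ fibSet m ↔ n < 2 ^ m ∧ ∀ j, ¬(n.testBit j ∧ n.testBit (j + 1)) := by
  simp only [fibSet, Finset.mem_filter, Finset.mem_range]

theorem mem_fibCycSet {m n : ℕ} :
    n ∈ fibCycSet m ↔
      (1 ≤ n ∧ n ≤ 2 ^ m - 2) ∧ ∀ j < m, ¬(n.testBit j ∧ n.testBit ((j + 1) % m)) := by
  simp only [fibCycSet, Finset.mem_filter, Finset.mem_Icc]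

theorem three_mul_lt_of_mem_fibSet {m n : ℕ} (hn : n ∈ fibSet m) : 3 * n < 2 ^ (m + 1) := by
  obtain ⟨hlt, hbits⟩ := mem_fibSet_s1.mp hn
  have hdisj : n &&& 2 * n = 0 := by
    refine Nat.zero_of_testBit_eq_false fun j ↦ ?_
    rcases j with _ | j
    · simp [Nat.testBit_zero]
    · have hdouble : (2 * n).testBit (j + 1) = n.testBit j := by simp [Nat.testBit_add_one]
      rw [Nat.testBit_and, hdouble, Bool.and_comm, ← Bool.not_eq_true, Bool.and_eq_true]
      exact hbits j
  calc
    3 * n = n + 2 * n := by ring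
    _ = n ||| 2 * n := by rw [← or_add_and, hdisj, add_zero]
    _ < 2 ^ (m + 1) := Nat.or_lt_two_pow (by omega) (by omega)

theorem div_two_mem_fibSet {m n : ℕ} (hn : n ∈ fibSet (m + 1)) : n / 2 ∈ fibSet m := by
  obtain ⟨hlt, hbits⟩ := mem_fibSet_s1.mp hn
  refine mem_fibSet_s1.mpr ⟨by omega, fun j ↦ ?_⟩
  simpa only [Nat.testBit_div_two] using hbits (j + 1)

theorem fibCycSet_subset_fibSet (m : ℕ) : fibCycSet m ⊆ fibSet m := by
  intro n hn
  obtain ⟨⟨hpos, hle⟩, hcyc⟩ := mem_fibCycSet.mp hn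
  have hlt : n < 2 ^ m := by omega
  refine mem_fibSet_s1.mpr ⟨hlt, fun j ⟨hj, hj'⟩ ↦ ?_⟩
  have hjm : j + 1 < m := by
    by_contra! hmj
    simp [Nat.testBit_lt_two_pow (hlt.trans_le (Nat.pow_le_pow_right two_pos hmj))] at hj'
  exact hcyc j (by omega) ⟨hj, by rwa [Nat.mod_eq_of_lt hjm]⟩

theorem mem_fibSet_of_testBit_eq_false {m n : ℕ} (hn : n ∈ fibSet (m + 1))
    (hm : n.testBit m = false) : n ∈ fibSet m := by
  obtain ⟨hlt, hbits⟩ := mem_fibSet_s1.mp hn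
  refine mem_fibSet_s1.mpr ⟨Nat.lt_pow_two_of_testBit n fun j hj ↦ ?_, hbits⟩
  rcases hj.eq_or_lt with rfl | hj
  · exact hm
  · exact Nat.testBit_lt_two_pow (hlt.trans_le (Nat.pow_le_pow_right two_pos hj))

theorem even_or_mem_fibSet_of_mem_fibCycSet {m n : ℕ} (hn : n ∈ fibCycSet (m + 1)) :
    Even n ∨ n ∈ fibSet m := by
  have hcyc := (mem_fibCycSet.mp hn).2 m m.lt_succ_self
  rw [Nat.mod_self, Nat.testBit_zero, decide_eq_true_eq, ← Nat.odd_iff, not_and_or,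
    Nat.not_odd_iff_even, Bool.not_eq_true] at hcyc
  exact hcyc.symm.imp_right
    (mem_fibSet_of_testBit_eq_false (fibCycSet_subset_fibSet _ hn))

/-- The number with binary representation `1010…10` (`t` repetitions of `10`), whose ones are in
the positions `1, 3, …, 2 * t - 1`; the maxima of the sets `fibCycSet m` are built from it. -/
def alternatingBits (t : ℕ) : ℕ :=
  ∑ i ∈ Finset.range t, 2 ^ (2 * i + 1)

theorem three_mul_alternatingBits_add_two (t : ℕ) :
    3 * alternatingBits t + 2 = 2 ^ (2 * t + 1) := by
  induction t with
  | zero => simp [alternatingBits]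
  | succ t ih =>
    rw [alternatingBits, Finset.sum_range_succ, ← alternatingBits]
    calc
      3 * (alternatingBits t + 2 ^ (2 * t + 1)) + 2
          = (3 * alternatingBits t + 2) + 3 * 2 ^ (2 * t + 1) := by ring
      _ = 2 ^ (2 * (t + 1) + 1) := by rw [ih]; ring

theorem odd_of_testBit_alternatingBits {t j : ℕ} (hj : (alternatingBits t).testBit j) :
    Odd j := by
  have hsum : alternatingBits t =
      ∑ k ∈ (Finset.range t).image (fun i ↦ 2 * i + 1), 2 ^ k :=
    (Finset.sum_image fun i _ k _ hik ↦ by simpa using hik).symm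
  rw [hsum, testBit_sum_two_pow, Finset.mem_image] at hj
  obtain ⟨i, -, rfl⟩ := hj
  exact odd_two_mul_add_one i

theorem alternatingBits_mem_fibCycSet {t : ℕ} (ht : t ≠ 0) :
    alternatingBits t ∈ fibCycSet (2 * t) := by
  have hformula := three_mul_alternatingBits_add_two t
  have hpow : 2 ^ 2 ≤ 2 ^ (2 * t) := Nat.pow_le_pow_right two_pos (by omega)
  refine mem_fibCycSet.mpr ⟨by omega, fun j _ ⟨hj, hj'⟩ ↦ ?_⟩
  have hodd := odd_of_testBit_alternatingBits hj
  have hodd' := odd_of_testBit_alternatingBits hj'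
  rw [Nat.odd_iff, Nat.mod_mul_right_mod] at hodd'
  rw [Nat.odd_iff] at hodd
  omega

theorem two_mul_alternatingBits_mem_fibCycSet {t : ℕ} (ht : t ≠ 0) :
    2 * alternatingBits t ∈ fibCycSet (2 * t + 1) := by
  have hformula := three_mul_alternatingBits_add_two t
  have hpow : 2 ^ 2 ≤ 2 ^ (2 * t) := Nat.pow_le_pow_right two_pos (by omega)
  have hbits {j : ℕ} (hj : (2 * alternatingBits t).testBit j) : j ≠ 0 ∧ Even j := by
    rcases j with _ | j
    · simp [Nat.testBit_zero] at hj
    · rw [Nat.testBit_add_one, Nat.mul_div_cancel_left _ two_pos] at hj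
      exact ⟨j.succ_ne_zero, (odd_of_testBit_alternatingBits hj).add_one⟩
  refine mem_fibCycSet.mpr ⟨by omega, fun j hjm ⟨hj, hj'⟩ ↦ ?_⟩
  obtain ⟨hne, heven'⟩ := hbits hj'
  rcases (show j + 1 ≤ 2 * t + 1 from hjm).eq_or_lt with hlast | hlt
  · exact hne (by rw [hlast, Nat.mod_self])
  · rw [Nat.mod_eq_of_lt hlt] at heven'
    exact Nat.not_even_iff_odd.mpr (hbits hj).2.add_one heven'

theorem isGreatest_fibCycSet_two_mul {t : ℕ} (ht : t ≠ 0) :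
    IsGreatest (fibCycSet (2 * t) : Set ℕ) (alternatingBits t) := by
  refine ⟨alternatingBits_mem_fibCycSet ht, fun n hn ↦ ?_⟩
  have hformula := three_mul_alternatingBits_add_two t
  have hbound := three_mul_lt_of_mem_fibSet (fibCycSet_subset_fibSet _ hn)
  omega

theorem isGreatest_fibCycSet_two_mul_add_one {t : ℕ} (ht : t ≠ 0) :
    IsGreatest (fibCycSet (2 * t + 1) : Set ℕ) (2 * alternatingBits t) := by
  refine ⟨two_mul_alternatingBits_mem_fibCycSet ht, fun n hn ↦ ?_⟩
  have hformula := three_mul_alternatingBits_add_two t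
  rcases even_or_mem_fibSet_of_mem_fibCycSet hn with heven | hn'
  · have hbound := three_mul_lt_of_mem_fibSet (div_two_mem_fibSet (fibCycSet_subset_fibSet _ hn))
    have := Nat.two_mul_div_two_of_even heven
    omega
  · have hbound := three_mul_lt_of_mem_fibSet hn'
    omega

theorem finset_max_eq_of_isGreatest {α : Type*} [LinearOrder α] {s : Finset α} {a : α}
    (h : IsGreatest (s : Set α) a) : s.max = a := by
  have hs : s.Nonempty := ⟨a, Finset.mem_coe.mp h.1⟩
  rw [← Finset.coe_max' hs, (s.isGreatest_max' hs).unique h]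

theorem max_fibCycSet (m : ℕ) (hm : 2 ≤ m) :
    (Odd m → (fibCycSet m).max = ((2 * (2 ^ m + 1)) / 3 - 2 : ℕ)) ∧
    (Even m → (fibCycSet m).max = ((2 * (2 ^ m - 1)) / 3 : ℕ)) := by
  constructor
  · rintro ⟨t, rfl⟩
    have hvalue : 2 * (2 ^ (2 * t + 1) + 1) / 3 - 2 = 2 * alternatingBits t := by
      have := three_mul_alternatingBits_add_two t
      omega
    rw [hvalue]
    exact finset_max_eq_of_isGreatest (isGreatest_fibCycSet_two_mul_add_one (by omega))
  · intro heven
    obtain ⟨t, rfl⟩ := even_iff_exists_two_mul.mp heven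
    have hvalue : 2 * (2 ^ (2 * t) - 1) / 3 = alternatingBits t := by
      have := three_mul_alternatingBits_add_two t
      omega
    rw [hvalue]
    exact finset_max_eq_of_isGreatest (isGreatest_fibCycSet_two_mul (by omega))
end

section
/- For every integer m ≥ 4, the identity f^cyc_m(X) = X·(1 + X·f_{m-2}(X)^2)·f_{m-3}(X)^4 holds in F_2[X]. -/
open Polynomial

/-- The `m`-th fibbinary polynomial over `F_2`. -/
noncomputable def fibPoly (m : ℕ) : Polynomial (ZMod 2) :=
  ∑ i ∈ fibSet m, X ^ i

/-- The `m`-th cyclic fibbinary polynomial over `F_2`. -/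
noncomputable def fibCycPoly (m : ℕ) : Polynomial (ZMod 2) :=
  ∑ i ∈ fibCycSet m, X ^ i

/-!
Split the exponents by their lowest bits: an even fibbinary number is `2k` and an odd one is
`4k + 1`, with `k` again fibbinary, and squaring is additive in characteristic two. This gives
`f_{m+2} = f_{m+1}^2 + X f_m^4`, and by induction the second recursion
`f_{m+2} = 1 + X f_{m+1} f_m^2`. For cyclic exponents an odd number additionally has top bit zero,
so the same splitting gives `1 + f^cyc_{m+3} = f_{m+2}^2 + X f_m^4`, where the `1` accounts for the
excluded exponent `0`. Squaring the second recursion and substituting yields the factorization.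
-/

section BinarySplitting

variable {S A B : Finset ℕ}

theorem eq_image_union_image_of_mem_iff (hA : ∀ k, 2 * k ∈ S ↔ k ∈ A)
    (hB : ∀ k, 4 * k + 1 ∈ S ↔ k ∈ B) (hS : ∀ i ∈ S, i % 4 ≠ 3) :
    S = A.image (2 * ·) ∪ B.image (4 * · + 1) := by
  ext i
  simp only [Finset.mem_union, Finset.mem_image, ← hA, ← hB]
  constructor
  · intro hi
    have := hS i hi
    obtain h | h : i = 2 * (i / 2) ∨ i = 4 * (i / 4) + 1 := by lia
    · exact .inl ⟨i / 2, h ▸ hi, h.symm⟩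
    · exact .inr ⟨i / 4, h ▸ hi, h.symm⟩
  · rintro (⟨k, hk, rfl⟩ | ⟨k, hk, rfl⟩) <;> exact hk

theorem sum_eq_sum_two_mul_add_sum_four_mul_add_one {M : Type*} [AddCommMonoid M] (f : ℕ → M)
    (hA : ∀ k, 2 * k ∈ S ↔ k ∈ A) (hB : ∀ k, 4 * k + 1 ∈ S ↔ k ∈ B)
    (hS : ∀ i ∈ S, i % 4 ≠ 3) :
    ∑ i ∈ S, f i = ∑ k ∈ A, f (2 * k) + ∑ k ∈ B, f (4 * k + 1) := by
  have hdisj : Disjoint (A.image (2 * ·)) (B.image (4 * · + 1)) := by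
    simp only [Finset.disjoint_left, Finset.mem_image]
    lia
  rw [eq_image_union_image_of_mem_iff hA hB hS, Finset.sum_union hdisj,
    Finset.sum_image fun _ _ _ _ h => by lia, Finset.sum_image fun _ _ _ _ h => by lia]

theorem sum_pow_eq_sq_add_mul_pow_four {R : Type*} [CommSemiring R] [CharP R 2] (x : R)
    (hA : ∀ k, 2 * k ∈ S ↔ k ∈ A) (hB : ∀ k, 4 * k + 1 ∈ S ↔ k ∈ B)
    (hS : ∀ i ∈ S, i % 4 ≠ 3) :
    ∑ i ∈ S, x ^ i = (∑ k ∈ A, x ^ k) ^ 2 + x * (∑ k ∈ B, x ^ k) ^ 4 := by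
  have sum_pow_four : (∑ k ∈ B, x ^ k) ^ 4 = ∑ k ∈ B, (x ^ k) ^ 4 :=
    sum_pow_char_pow 2 2 B (x ^ ·)
  rw [sum_eq_sum_two_mul_add_sum_four_mul_add_one (x ^ ·) hA hB hS, CharTwo.sum_sq, sum_pow_four,
    Finset.mul_sum]
  simp only [pow_succ', pow_mul']

end BinarySplitting

theorem isFibbinary_zero : IsFibbinary 0 := by
  simp [IsFibbinary]

theorem isFibbinary_iff_div_two (i : ℕ) : IsFibbinary i ↔ i % 4 ≠ 3 ∧ IsFibbinary (i / 2) := by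
  have lowest_two_bits : ¬(i.testBit 0 ∧ i.testBit (0 + 1)) ↔ i % 4 ≠ 3 := by
    simp only [Nat.testBit_add_one, Nat.testBit_zero, decide_eq_true_eq]
    lia
  rw [IsFibbinary, ← Nat.and_forall_add_one, lowest_two_bits]
  simp only [Nat.testBit_add_one, IsFibbinary]

theorem isFibbinary_two_mul (k : ℕ) : IsFibbinary (2 * k) ↔ IsFibbinary k := by
  rw [isFibbinary_iff_div_two, Nat.mul_div_cancel_left k two_pos]
  exact and_iff_right (by lia)

theorem isFibbinary_four_mul_add_one (k : ℕ) : IsFibbinary (4 * k + 1) ↔ IsFibbinary k := by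
  rw [isFibbinary_iff_div_two, show (4 * k + 1) / 2 = 2 * k by lia, isFibbinary_two_mul]
  exact and_iff_right (by lia)

theorem fibPoly_zero : fibPoly 0 = 1 := by
  have fibSet_zero : fibSet 0 = {0} := by
    ext i
    simp +contextual [mem_fibSet, isFibbinary_zero]
  rw [fibPoly, fibSet_zero, Finset.sum_singleton, pow_zero]

theorem fibPoly_one : fibPoly 1 = 1 + X := by
  have isFibbinary_one : IsFibbinary 1 := (isFibbinary_four_mul_add_one 0).2 isFibbinary_zero
  have fibSet_one : fibSet 1 = {0, 1} := by
    ext i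
    rw [mem_fibSet, Finset.mem_insert, Finset.mem_singleton, pow_one]
    grind [isFibbinary_zero]
  rw [fibPoly, fibSet_one, Finset.sum_pair zero_ne_one, pow_zero, pow_one]

theorem fibPoly_add_two (m : ℕ) : fibPoly (m + 2) = fibPoly (m + 1) ^ 2 + X * fibPoly m ^ 4 := by
  refine sum_pow_eq_sq_add_mul_pow_four X (fun k => ?even) (fun k => ?odd) fun i hi =>
    ((isFibbinary_iff_div_two i).1 (mem_fibSet.1 hi).2).1
  case even =>
    rw [mem_fibSet, mem_fibSet, isFibbinary_two_mul]
    exact and_congr_left' (by lia)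
  case odd =>
    rw [mem_fibSet, mem_fibSet, isFibbinary_four_mul_add_one]
    exact and_congr_left' (by lia)

theorem fibPoly_add_two_eq_one_add (m : ℕ) :
    fibPoly (m + 2) = 1 + X * fibPoly (m + 1) * fibPoly m ^ 2 := by
  induction m with
  | zero =>
    rw [fibPoly_add_two, zero_add, fibPoly_zero, fibPoly_one, CharTwo.add_sq]
    ring
  | succ m ih =>
    calc fibPoly (m + 3)
      _ = fibPoly (m + 2) ^ 2 + X * fibPoly (m + 1) ^ 4 := fibPoly_add_two (m + 1)
      _ = 1 + X * fibPoly (m + 1) ^ 2 * (fibPoly (m + 1) ^ 2 + X * fibPoly m ^ 4) := by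
        rw [ih, CharTwo.add_sq]
        ring
      _ = 1 + X * fibPoly (m + 2) * fibPoly (m + 1) ^ 2 := by
        rw [← fibPoly_add_two]
        ring

theorem forall_not_testBit_cyclic_iff {n i : ℕ} (hi : i < 2 ^ (n + 1)) :
    (∀ j < n + 1, ¬(i.testBit j ∧ i.testBit ((j + 1) % (n + 1)))) ↔
      IsFibbinary i ∧ ¬(i.testBit n ∧ i.testBit 0) := by
  rw [Nat.forall_lt_succ_right, Nat.mod_self]
  refine and_congr_left' ⟨fun h j => ?_, fun h j hj => ?_⟩
  · obtain hj | hj := lt_or_ge j n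
    · simpa only [Nat.mod_eq_of_lt (Nat.succ_lt_succ hj)] using h j hj
    · have : i.testBit (j + 1) = false :=
        Nat.testBit_eq_false_of_lt (hi.trans_le (Nat.pow_le_pow_right two_pos (by lia)))
      simp [this]
  · simpa only [Nat.mod_eq_of_lt (Nat.succ_lt_succ hj)] using h j

theorem mem_insert_zero_fibCycSet {n i : ℕ} :
    i ∈ insert 0 (fibCycSet (n + 1)) ↔
      i < 2 ^ (n + 1) ∧ IsFibbinary i ∧ ¬(i.testBit n ∧ i.testBit 0) := by
  rw [Finset.mem_insert, fibCycSet, Finset.mem_filter, Finset.mem_Icc]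
  constructor
  · rintro (rfl | ⟨⟨hpos, hle⟩, hcyc⟩)
    · exact ⟨by positivity, isFibbinary_zero, by simp⟩
    · have hi : i < 2 ^ (n + 1) := by lia
      exact ⟨hi, (forall_not_testBit_cyclic_iff hi).1 hcyc⟩
  · rintro ⟨hi, hfib, hwrap⟩
    have ne_all_ones : i ≠ 2 ^ (n + 1) - 1 := by
      rintro rfl
      simp [-Nat.testBit_zero] at hwrap
    obtain rfl | hpos := i.eq_zero_or_pos
    · exact .inl rfl
    · exact .inr ⟨⟨hpos, by lia⟩, (forall_not_testBit_cyclic_iff hi).2 ⟨hfib, hwrap⟩⟩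

theorem two_mul_mem_insert_zero_fibCycSet {n k : ℕ} :
    2 * k ∈ insert 0 (fibCycSet (n + 1)) ↔ k ∈ fibSet n := by
  have even_bit : (2 * k).testBit 0 = false := by simp
  rw [mem_insert_zero_fibCycSet, mem_fibSet, isFibbinary_two_mul, even_bit]
  simp [pow_succ']

theorem lt_two_pow_iff_lt_succ_and_testBit_eq_false {n k : ℕ} :
    k < 2 ^ n ↔ k < 2 ^ (n + 1) ∧ k.testBit n = false := by
  refine ⟨fun hk => ⟨by lia, Nat.testBit_eq_false_of_lt hk⟩, fun ⟨hk, htop⟩ => ?_⟩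
  by_contra! hle
  simp [Nat.testBit_of_two_pow_le_and_two_pow_add_one_gt hle hk] at htop

theorem four_mul_add_one_mem_insert_zero_fibCycSet {n k : ℕ} :
    4 * k + 1 ∈ insert 0 (fibCycSet (n + 3)) ↔ k ∈ fibSet n := by
  have odd_bit : (4 * k + 1).testBit 0 = true := by
    rw [Nat.testBit_zero, decide_eq_true_eq]
    lia
  have top_bit : (4 * k + 1).testBit (n + 2) = k.testBit n := by
    rw [Nat.testBit_add, show (4 * k + 1) / 2 ^ 2 = k by lia]
  have bound : 4 * k + 1 < 2 ^ (n + 3) ↔ k < 2 ^ (n + 1) := by lia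
  rw [mem_insert_zero_fibCycSet, mem_fibSet, isFibbinary_four_mul_add_one, odd_bit, top_bit, bound,
    lt_two_pow_iff_lt_succ_and_testBit_eq_false (n := n)]
  simp only [and_true, Bool.not_eq_true]
  tauto

theorem one_add_fibCycPoly (n : ℕ) :
    1 + fibCycPoly (n + 3) = fibPoly (n + 2) ^ 2 + X * fibPoly n ^ 4 := by
  have zero_notMem : 0 ∉ fibCycSet (n + 3) := by simp [fibCycSet]
  rw [fibCycPoly, ← pow_zero X, ← Finset.sum_insert zero_notMem]
  exact sum_pow_eq_sq_add_mul_pow_four X (fun _ => two_mul_mem_insert_zero_fibCycSet)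
    (fun _ => four_mul_add_one_mem_insert_zero_fibCycSet)
    fun i hi => ((isFibbinary_iff_div_two i).1 (mem_insert_zero_fibCycSet.1 hi).2.1).1

theorem fibCycPoly_factor (m : ℕ) (hm : 4 ≤ m) :
    fibCycPoly m = X * (1 + X * (fibPoly (m - 2)) ^ 2) * (fibPoly (m - 3)) ^ 4 := by
  obtain ⟨n, rfl⟩ : ∃ n, m = n + 3 := ⟨m - 3, by lia⟩
  change fibCycPoly (n + 3) = X * (1 + X * fibPoly (n + 1) ^ 2) * fibPoly n ^ 4
  refine add_left_cancel (a := 1) ?_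
  calc 1 + fibCycPoly (n + 3)
    _ = fibPoly (n + 2) ^ 2 + X * fibPoly n ^ 4 := one_add_fibCycPoly n
    _ = 1 + X * (1 + X * fibPoly (n + 1) ^ 2) * fibPoly n ^ 4 := by
      rw [fibPoly_add_two_eq_one_add, CharTwo.add_sq]
      ring
end
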